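/- arXiv:1603.09288 — 5 statements merged into one kernel-verified Lean document; each statement's English description precedes it below -/
import Mathlib

section
/- The Furtwängler map Ψ : ℤ[X,Y] → G', sending a bivariate integer polynomial f(X,Y) to s₂^{f(x−1,y−1)}, is a homomorphism from the additive group underlying the polynomial ring ℤ[X,Y] onto the (multiplicative, abelian) commutator subgroup G' of G; in particular Ψ is additive (Ψ(f+g) = Ψ(f)·Ψ(g)) and surjective. -/
/-!
The commutator subgroup `G'` is abelian, hence a `ℤ`-module, and the monomials are a `ℤ`-basis of
`ℤ[X, Y]`; so there is exactly one additive map `Ψ` into `G'` that sends `X ^ i * Y ^ j` to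
`s₂^{(x-1)^i (y-1)^j}`. Its image contains the subgroup `N` generated by these iterated
commutators (`wClosure`), so for surjectivity it is enough to see `G' ≤ N`. On `G'` the operators
`t ↦ [t, x]` and `t ↦ [t, y]` commute (`pcomm_pcomm_comm`), so both map the generators of `N` to
generators; because `t^x = t * [t, x]`, conjugation by `x` and by `y` maps `N` into itself, and
as `G` is finite and generated by `x` and `y`, `N` is normal. Finally `N` contains `[y, x]`, so
`G ⧸ N` is generated by two commuting elements and is abelian, that is, `G' ≤ N`
(`commutator_le_wClosure`).
-/

open MvPolynomial

/-- The paper's commutator `[a,b] = a⁻¹ b⁻¹ a b`. -/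
def pcomm {G : Type*} [Group G] (a b : G) : G := a⁻¹ * b⁻¹ * a * b

/-- The iterated commutator `s₂^{(x-1)^i (y-1)^j}`, where `s₂ = [y,x]`,
obtained by commutating `i` times with `x` and `j` times with `y`. -/
def wIter {G : Type*} [Group G] (x y : G) (i j : ℕ) : G :=
  (fun t => pcomm t x)^[i] ((fun t => pcomm t y)^[j] (pcomm y x))

lemma pcomm_mem_commutator {G : Type*} [Group G] (a b : G) : pcomm a b ∈ commutator G := by
  have h := Subgroup.commutator_mem_commutator (Subgroup.mem_top a⁻¹) (Subgroup.mem_top b⁻¹)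
  rw [commutatorElement_def, inv_inv, inv_inv] at h
  exact h

lemma conj_eq_mul_pcomm {G : Type*} [Group G] (t g : G) : g⁻¹ * t * g = t * pcomm t g := by
  simp only [pcomm]; group

/-- In a metabelian group, the operators `t ↦ t^{x-1}` and `t ↦ t^{y-1}` on `G'` commute, because
`xy` and `yx` differ by an element of `G'`, which acts trivially on `G'`. -/
lemma pcomm_pcomm_comm {G : Type*} [Group G]
    (hmeta : ∀ a ∈ commutator G, ∀ b ∈ commutator G, a * b = b * a)
    (x y : G) {t : G} (ht : t ∈ commutator G) :
    pcomm (pcomm t x) y = pcomm (pcomm t y) x := by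
  have hconj : ∀ g s : G, s ∈ commutator G → g⁻¹ * s * g ∈ commutator G := fun g s hs => by
    simpa using (inferInstance : (commutator G).Normal).conj_mem s hs g⁻¹
  -- The two orders of conjugation agree on `t`.
  have hc : y⁻¹ * (x⁻¹ * t * x) * y = x⁻¹ * (y⁻¹ * t * y) * x := by
    have h := hmeta _ (hconj x _ (hconj y _ ht)) _ (pcomm_mem_commutator x y)
    calc y⁻¹ * (x⁻¹ * t * x) * y
        = (pcomm x y)⁻¹ * (x⁻¹ * (y⁻¹ * t * y) * x * pcomm x y) := by
          simp only [pcomm]; group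
      _ = _ := by rw [h]; group
  have hx := hconj x t ht
  have hy := hconj y t ht
  have e : ∀ a b : G, pcomm (pcomm t a) b
      = (a⁻¹ * t * a)⁻¹ * t * ((b⁻¹ * t * b)⁻¹ * (b⁻¹ * (a⁻¹ * t * a) * b)) := fun a b => by
    simp only [pcomm]; group
  rw [e x y, e y x, hc]
  have h1 := hmeta _ (inv_mem hx) _ ht
  have h2 := hmeta _ (inv_mem hx) _ (inv_mem hy)
  have h3 := hmeta _ (inv_mem hy) _ ht
  rw [h1, h3, mul_assoc t, mul_assoc t, ← mul_assoc (x⁻¹ * t * x)⁻¹, h2, mul_assoc (y⁻¹ * t * y)⁻¹]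

lemma wIter_mem_commutator {G : Type*} [Group G] (x y : G) (i j : ℕ) :
    wIter x y i j ∈ commutator G := by
  unfold wIter
  cases i with
  | succ i => rw [Function.iterate_succ_apply']; exact pcomm_mem_commutator _ _
  | zero =>
    cases j with
    | succ j =>
      rw [Function.iterate_zero_apply, Function.iterate_succ_apply']
      exact pcomm_mem_commutator _ _
    | zero => exact pcomm_mem_commutator _ _

lemma pcomm_wIter_left {G : Type*} [Group G] (x y : G) (i j : ℕ) :
    pcomm (wIter x y i j) x = wIter x y (i + 1) j := by
  simp only [wIter, Function.iterate_succ_apply']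

lemma pcomm_wIter_right {G : Type*} [Group G]
    (hmeta : ∀ a ∈ commutator G, ∀ b ∈ commutator G, a * b = b * a) (x y : G) (i j : ℕ) :
    pcomm (wIter x y i j) y = wIter x y i (j + 1) := by
  induction i with
  | zero => simp only [wIter, Function.iterate_succ_apply', Function.iterate_zero_apply]
  | succ i ih =>
    rw [← pcomm_wIter_left, pcomm_pcomm_comm hmeta x y (wIter_mem_commutator x y i j), ih,
      pcomm_wIter_left]

/-- The subgroup generated by the iterated commutators `s₂^{(x-1)^i (y-1)^j}`. -/
def wClosure {G : Type*} [Group G] (x y : G) : Subgroup G :=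
  Subgroup.closure (Set.range fun m : ℕ × ℕ => wIter x y m.1 m.2)

lemma wIter_mem_wClosure {G : Type*} [Group G] (x y : G) (i j : ℕ) :
    wIter x y i j ∈ wClosure x y :=
  Subgroup.subset_closure ⟨(i, j), rfl⟩

lemma conj_mem_wClosure {G : Type*} [Group G] (x y g : G)
    (hg : ∀ i j, pcomm (wIter x y i j) g ∈ wClosure x y) {t : G} (ht : t ∈ wClosure x y) :
    g⁻¹ * t * g ∈ wClosure x y := by
  have hle : wClosure x y ≤ (wClosure x y).comap (MulAut.conj g⁻¹).toMonoidHom := by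
    refine (Subgroup.closure_le _).2 ?_
    rintro _ ⟨⟨i, j⟩, rfl⟩
    have := mul_mem (wIter_mem_wClosure x y i j) (hg i j)
    rw [← conj_eq_mul_pcomm] at this
    simpa using this
  simpa using hle ht

lemma wClosure_normal {G : Type*} [Group G] [Finite G]
    (hmeta : ∀ a ∈ commutator G, ∀ b ∈ commutator G, a * b = b * a)
    (x y : G) (hgen : Subgroup.closure ({x, y} : Set G) = ⊤) : (wClosure x y).Normal := by
  -- In a finite group, the powers of `g` include `g⁻¹`, so one inclusion is enough.
  have key : ∀ g : G, (∀ t ∈ wClosure x y, g⁻¹ * t * g ∈ wClosure x y) →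
      ∀ t ∈ wClosure x y, g * t * g⁻¹ ∈ wClosure x y := by
    intro g hg t ht
    have hpow : ∀ n : ℕ, (g ^ n)⁻¹ * t * g ^ n ∈ wClosure x y := by
      intro n
      induction n with
      | zero => simpa using ht
      | succ n ih =>
        have := hg _ ih
        simpa [pow_succ, mul_assoc] using this
    have hinv : g ^ (orderOf g - 1) = g⁻¹ := by
      rw [eq_inv_iff_mul_eq_one, ← pow_succ, Nat.sub_add_cancel (orderOf_pos g),
        pow_orderOf_eq_one]
    simpa [hinv] using hpow (orderOf g - 1)
  have hx : ∀ t ∈ wClosure x y, x⁻¹ * t * x ∈ wClosure x y := fun t ht =>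
    conj_mem_wClosure x y x
      (fun i j => by rw [pcomm_wIter_left]; exact wIter_mem_wClosure _ _ _ _) ht
  have hy : ∀ t ∈ wClosure x y, y⁻¹ * t * y ∈ wClosure x y := fun t ht =>
    conj_mem_wClosure x y y
      (fun i j => by rw [pcomm_wIter_right hmeta]; exact wIter_mem_wClosure _ _ _ _) ht
  have hall : ∀ g : G, ∀ t ∈ wClosure x y, g⁻¹ * t * g ∈ wClosure x y := by
    intro g
    have hg : g ∈ Subgroup.closure ({x, y} : Set G) := hgen ▸ Subgroup.mem_top g
    induction hg using Subgroup.closure_induction with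
    | mem g hg =>
      rcases hg with rfl | rfl
      · exact hx
      · exact hy
    | one => intro t ht; simpa using ht
    | mul a b _ _ iha ihb =>
      intro t ht
      simpa [mul_assoc] using ihb _ (iha t ht)
    | inv a _ ih =>
      intro t ht
      simpa using key a ih t ht
  exact ⟨fun t ht g => by simpa using hall g⁻¹ t ht⟩

lemma commutator_le_wClosure {G : Type*} [Group G] [Finite G]
    (hmeta : ∀ a ∈ commutator G, ∀ b ∈ commutator G, a * b = b * a)
    (x y : G) (hgen : Subgroup.closure ({x, y} : Set G) = ⊤) :
    commutator G ≤ wClosure x y := by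
  have := wClosure_normal hmeta x y hgen
  have hyx : ((y : G ⧸ wClosure x y)) * x = x * y := by
    rw [← QuotientGroup.mk_mul, ← QuotientGroup.mk_mul, eq_comm, QuotientGroup.eq]
    have h := wIter_mem_wClosure x y 0 0
    have h2 := inv_mem h
    simpa [wIter, pcomm, mul_assoc] using this.conj_mem _ h 1
  -- An element commuting with both generators is central; this is applied first to the
  -- generators themselves and then to every element.
  have step : ∀ q : G ⧸ wClosure x y, q * x = x * q → q * y = y * q →
      ∀ g : G, q * g = g * q := by
    intro q h1 h2 g
    have hg : g ∈ Subgroup.closure ({x, y} : Set G) := hgen ▸ Subgroup.mem_top g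
    induction hg using Subgroup.closure_induction with
    | mem g hg =>
      rcases hg with rfl | rfl
      · exact h1
      · exact h2
    | one => simp
    | mul a b _ _ iha ihb =>
      exact (show Commute q _ from iha).mul_right ihb
    | inv a _ ih => exact (show Commute q _ from ih).inv_right
  have hx := step x rfl hyx.symm
  have hy := step y hyx rfl
  have hcomm : ∀ g h : G, (g : G ⧸ wClosure x y) * h = h * g := fun g h =>
    step g (hx g).symm (hy g).symm h
  rw [commutator_def, Subgroup.commutator_le]
  intro a _ b _
  rw [← QuotientGroup.eq_one_iff, commutatorElement_def]
  simp only [QuotientGroup.mk_mul, QuotientGroup.mk_inv]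
  rw [hcomm a b]
  group

theorem furtwaengler_hom_onto_commutator
    {G : Type*} [Group G] [Finite G]
    (p : ℕ) (hp : p.Prime) (hpG : IsPGroup p G)
    (hmeta : ∀ a ∈ commutator G, ∀ b ∈ commutator G, a * b = b * a)
    (x y : G) (hgen : Subgroup.closure ({x, y} : Set G) = ⊤)
    (hab : Nat.card (G ⧸ commutator G) = p ^ 2)
    (hexp : ∀ g : G, g ^ p ∈ commutator G) :
    ∃ Ψ : MvPolynomial (Fin 2) ℤ → G,
      (∀ f g, Ψ (f + g) = Ψ f * Ψ g) ∧
      (∀ i j : ℕ, Ψ (X 0 ^ i * X 1 ^ j) = wIter x y i j) ∧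
      (∀ t : G, t ∈ commutator G ↔ ∃ f, Ψ f = t) := by
  let _ : CommGroup (commutator G) :=
    { (inferInstance : Group (commutator G)) with
      mul_comm := fun a b => Subtype.ext (hmeta a a.2 b b.2) }
  let φ : MvPolynomial (Fin 2) ℤ →ₗ[ℤ] Additive (commutator G) :=
    (basisMonomials (Fin 2) ℤ).constr ℤ
      (fun m => Additive.ofMul ⟨wIter x y (m 0) (m 1), wIter_mem_commutator x y _ _⟩)
  have hadd : ∀ f g, (((φ (f + g)).toMul : commutator G) : G)
      = ((φ f).toMul : commutator G) * ((φ g).toMul : commutator G) := fun f g => by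
    rw [map_add]; rfl
  have hmon : ∀ i j : ℕ, (((φ (X 0 ^ i * X 1 ^ j)).toMul : commutator G) : G)
      = wIter x y i j := fun i j => by
    have h : (X 0 ^ i * X 1 ^ j : MvPolynomial (Fin 2) ℤ)
        = basisMonomials (Fin 2) ℤ (Finsupp.single 0 i + Finsupp.single 1 j) := by
      simp [X_pow_eq_monomial, monomial_mul]
    rw [h, Module.Basis.constr_basis]
    simp
  refine ⟨fun f => ((φ f).toMul : commutator G), hadd, hmon, fun t => ⟨fun ht => ?_, ?_⟩⟩
  · have ht' := commutator_le_wClosure hmeta x y hgen ht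
    unfold wClosure at ht'
    clear ht
    induction ht' using Subgroup.closure_induction with
    | mem g hg =>
      obtain ⟨⟨i, j⟩, rfl⟩ := hg
      exact ⟨_, hmon i j⟩
    | one => exact ⟨0, by simp⟩
    | mul a b _ _ iha ihb =>
      obtain ⟨f, rfl⟩ := iha
      obtain ⟨g, rfl⟩ := ihb
      exact ⟨f + g, hadd f g⟩
    | inv a _ ih =>
      obtain ⟨f, rfl⟩ := ih
      exact ⟨-f, by simp⟩
  · rintro ⟨f, rfl⟩
    exact ((φ f).toMul : commutator G).2
end

section
/- The annihilator ideal 𝔄(G) equals 𝔚_{m−2}(γ) := (X^{m−2}, Y − γ·X^{m−3}, X² + 3X + 3) as ideals of ℤ[X,Y]. In particular, if the defect of commutativity of G is k = 0, equivalently γ = 0, then 𝔄(G) = 𝔜_{m−2} := (X^{m−2}, Y, X² + 3X + 3). -/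
/-!
Write `W` for the ideal on the right. The relations of the group say directly that its three
generators are annihilators (`Ψ` turns sums into products, and the powers `X ^ i` go to
`s_{i+2}`), so `W ≤ A`; and `X ^ (m - 3) ∉ A` because `s_{m-1} ≠ 1`. These two facts already force
`A = W`: the quotient `ℤ[X,Y]/W` is `ℤ[ω]/(λ ^ (m - 2))` with `λ = ω - 1` the class of `X`
and `ω` a primitive cube root of unity, a chain ring whose minimal nonzero ideal is generated by
`λ ^ (m - 3)`.

The chain ring argument is run by hand. Modulo `W + (X)` every polynomial is one of `0, 1, -1`
(`exists_residue`). Hence, if `f ∈ A` is congruent to `X ^ k * h` modulo `W`, the residue of `h`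
must be `0`: otherwise multiplying by `X ^ (m - 3 - k)` would put `X ^ (m - 3)` into `A`. So
`X` can be split off again and again until `f ≡ X ^ (m - 2) * h ≡ 0`.
-/

open MvPolynomial

/-- The higher commutators `s₂ = [y,x]`, `s_j = [s_{j-1}, x]` for `j ≥ 3`. -/
def sSeq {G : Type*} [Group G] (x y : G) (j : ℕ) : G :=
  (fun t => pcomm t x)^[j - 2] (pcomm y x)

/-- If an ideal `J` contains `3` and both variables, then it has at most the three residue classes
`0, 1, -1`. -/
lemma exists_residue (J : Ideal (MvPolynomial (Fin 2) ℤ)) (h3 : (3 : MvPolynomial (Fin 2) ℤ) ∈ J)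
    (hX : ∀ i, X i ∈ J) (h : MvPolynomial (Fin 2) ℤ) :
    h ∈ J ∨ h - 1 ∈ J ∨ h + 1 ∈ J := by
  have key : ∃ c : ℤ, h - C c ∈ J := by
    induction h using MvPolynomial.induction_on with
    | C a => exact ⟨a, by simp⟩
    | add p q hp hq =>
      obtain ⟨a, ha⟩ := hp
      obtain ⟨b, hb⟩ := hq
      refine ⟨a + b, ?_⟩
      have := J.add_mem ha hb
      rwa [C_add, add_sub_add_comm]
    | mul_X p i _ => exact ⟨0, by simpa using J.mul_mem_left p (hX i)⟩
  obtain ⟨c, hc⟩ := key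
  have h3C (q : ℤ) : (3 * C q : MvPolynomial (Fin 2) ℤ) ∈ J := J.mul_mem_right _ h3
  have hcase : ∃ q : ℤ, c = 3 * q ∨ c = 3 * q + 1 ∨ c = 3 * q - 1 := by
    refine ⟨(c + 1) / 3, ?_⟩
    omega
  obtain ⟨q, rfl | rfl | rfl⟩ := hcase
  · left
    convert J.add_mem hc (h3C q) using 1
    simp
  · right; left
    convert J.add_mem hc (h3C q) using 1
    simp
    ring
  · right; right
    convert J.add_mem hc (h3C q) using 1
    simp
    ring

/-- Let `W` be an ideal containing the three generators. An ideal `A ≥ W` that does not contain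
`X ^ (m - 3)` is no larger than `W`: in the chain ring `ℤ[X,Y]/W` every nonzero ideal contains the
class of `X ^ (m - 3)`. -/
lemma le_of_X_pow_notMem (m : ℕ) (hm : 3 ≤ m) (γ : ℤ) (hγ0 : m ≤ 4 → γ = 0)
    (W A : Ideal (MvPolynomial (Fin 2) ℤ))
    (hW1 : X 0 ^ (m - 2) ∈ W) (hW2 : X 1 - C γ * X 0 ^ (m - 3) ∈ W)
    (hW3 : X 0 ^ 2 + 3 * X 0 + 3 ∈ W) (hWA : W ≤ A) (hA : X 0 ^ (m - 3) ∉ A) :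
    A ≤ W := by
  set J := W ⊔ Ideal.span {(X 0 : MvPolynomial (Fin 2) ℤ)} with hJ
  have hWJ : W ≤ J := le_sup_left
  have hX0 : X 0 ∈ J := (le_sup_right : _ ≤ J) (Ideal.mem_span_singleton_self _)
  have h3 : (3 : MvPolynomial (Fin 2) ℤ) ∈ J := by
    convert J.sub_mem (hWJ hW3) (J.mul_mem_left (X 0 + 3) hX0) using 1
    ring
  have hX1 : X 1 ∈ J := by
    -- for `m = 3` the power `X ^ (m - 3)` is `1`, and it is `γ` that vanishes
    have : C γ * X 0 ^ (m - 3) ∈ J := by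
      rcases Nat.lt_or_ge 4 m with h | h
      · exact J.mul_mem_left _ (J.pow_mem_of_mem hX0 _ (by omega))
      · simp [hγ0 h]
    convert J.add_mem (hWJ hW2) this using 1
    ring
  have hres := exists_residue J h3 (by intro i; fin_cases i <;> assumption)
  intro f hf
  have step : ∀ k ≤ m - 2, ∃ h, f - X 0 ^ k * h ∈ W := by
    intro k
    induction k with
    | zero => exact fun _ => ⟨f, by simp⟩
    | succ k ih =>
      intro hk
      obtain ⟨h, hh⟩ := ih (by omega)
      -- `e` is the residue of `h`
      have unit_case (e : MvPolynomial (Fin 2) ℤ) (he : e * e = 1) (hJe : h - e ∈ J) : False := by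
        obtain ⟨w, hw, t, ht, hwt⟩ := Submodule.mem_sup.1 hJe
        obtain ⟨g, rfl⟩ := Ideal.mem_span_singleton'.1 ht
        apply hA
        obtain ⟨n, hn⟩ : ∃ n, m - 3 = k + n := ⟨m - 3 - k, by omega⟩
        have hn' : m - 2 = k + n + 1 := by omega
        rw [hn'] at hW1
        rw [hn]
        have hfh : X 0 ^ k * h ∈ A := by
          convert A.sub_mem hf (hWA hh) using 1
          ring
        have h1 := A.mul_mem_left (e * X 0 ^ n) hfh
        have h2 := A.mul_mem_left (e * g) (hWA hW1)
        have h3 := A.mul_mem_left (e * X 0 ^ (k + n)) (hWA hw)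
        convert A.sub_mem h1 (A.add_mem h2 h3) using 1
        have : h = e + (w + g * X 0) := by rw [hwt]; ring
        rw [this]
        linear_combination (-X 0 ^ (k + n)) * he
      rcases hres h with h0 | h1 | h1
      · obtain ⟨w, hw, t, ht, rfl⟩ := Submodule.mem_sup.1 h0
        obtain ⟨g, rfl⟩ := Ideal.mem_span_singleton'.1 ht
        refine ⟨g, ?_⟩
        convert W.add_mem hh (W.mul_mem_left (X 0 ^ k) hw) using 1
        ring
      · exact (unit_case 1 (by ring) h1).elim
      · exact (unit_case (-1) (by ring) (by simpa using h1)).elim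
  obtain ⟨h, hh⟩ := step (m - 2) le_rfl
  convert W.add_mem hh (W.mul_mem_right h hW1) using 1
  ring

theorem annihilator_maximal_class_threeGroup
    {G : Type*} [Group G] [Finite G]
    (m : ℕ) (hm : 3 ≤ m)
    (x y : G) (α β γ : ℤ)
    (hα : α = -1 ∨ α = 0 ∨ α = 1) (hβ : β = -1 ∨ β = 0 ∨ β = 1)
    (hγ : γ = -1 ∨ γ = 0 ∨ γ = 1) (hγ0 : m ≤ 4 → γ = 0)
    (hcard : Nat.card G = 3 ^ m)
    (hgen : Subgroup.closure ({x, y} : Set G) = ⊤)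
    (hx3 : x ^ 3 = sSeq x y (m - 1) ^ α)
    (hy3 : y ^ 3 * sSeq x y 2 ^ 3 * sSeq x y 3 = sSeq x y (m - 1) ^ β)
    (hpow : ∀ j, 2 ≤ j → sSeq x y j ^ 3 * sSeq x y (j + 1) ^ 3 * sSeq x y (j + 2) = 1)
    (hc2 : pcomm (sSeq x y 2) y = sSeq x y (m - 1) ^ γ)
    (hcj : ∀ j, 3 ≤ j → pcomm (sSeq x y j) y = 1)
    (hne : ∀ j, 2 ≤ j → j ≤ m - 1 → sSeq x y j ≠ 1)
    (htriv : ∀ j, m ≤ j → sSeq x y j = 1)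
    (hmeta : ∀ i j, 2 ≤ i → 2 ≤ j → pcomm (sSeq x y i) (sSeq x y j) = 1)
    (Ψ : MvPolynomial (Fin 2) ℤ → G)
    (hΨadd : ∀ f g, Ψ (f + g) = Ψ f * Ψ g)
    (hΨmon : ∀ i j : ℕ, Ψ (X 0 ^ i * X 1 ^ j) = wIter x y i j)
    (A : Ideal (MvPolynomial (Fin 2) ℤ))
    (hA : ∀ f, f ∈ A ↔ Ψ f = 1)
    :
    A = Ideal.span {X 0 ^ (m - 2), X 1 - C γ * X 0 ^ (m - 3), X 0 ^ 2 + 3 * X 0 + 3} ∧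
      (γ = 0 → A = Ideal.span {X 0 ^ (m - 2), X 1, X 0 ^ 2 + 3 * X 0 + 3}) := by
  have hpowX (i : ℕ) : Ψ (X 0 ^ i) = sSeq x y (i + 2) := by
    simpa [wIter, sSeq] using hΨmon i 0
  have hzsmul (n : ℤ) (g : MvPolynomial (Fin 2) ℤ) : Ψ (C n * g) = Ψ g ^ n := by
    let φ : MvPolynomial (Fin 2) ℤ →+ Additive G :=
      AddMonoidHom.mk' (fun f => Additive.ofMul (Ψ f)) fun f g => by rw [hΨadd]; rfl
    have := map_zsmul φ n g
    rw [← C_mul'] at this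
    exact this
  have hgenA : X 0 ^ (m - 2) ∈ A ∧ X 1 - C γ * X 0 ^ (m - 3) ∈ A ∧ X 0 ^ 2 + 3 * X 0 + 3 ∈ A := by
    refine ⟨?_, ?_, ?_⟩
    · rw [hA, hpowX]
      exact htriv _ (by omega)
    · have hY : Ψ (X 1) = sSeq x y (m - 1) ^ γ := by
        rw [← hc2]
        simpa [wIter, sSeq] using hΨmon 0 1
      have hsplit := hΨadd (X 1 - C γ * X 0 ^ (m - 3)) (C γ * X 0 ^ (m - 3))
      rw [sub_add_cancel, hY, hzsmul, hpowX, show m - 3 + 2 = m - 1 by omega] at hsplit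
      exact (hA _).2 (right_eq_mul.1 hsplit)
    · -- the summands are ordered as in the relation for `j = 2`
      have hsum : (X 0 ^ 2 + 3 * X 0 + 3 : MvPolynomial (Fin 2) ℤ)
          = C 3 * X 0 ^ 0 + C 3 * X 0 ^ 1 + X 0 ^ 2 := by
        rw [show (C 3 : MvPolynomial (Fin 2) ℤ) = 3 from map_ofNat C 3]
        ring
      rw [hA, hsum, hΨadd, hΨadd, hzsmul, hzsmul, hpowX, hpowX, hpowX]
      exact_mod_cast hpow 2 le_rfl
  have hnot : X 0 ^ (m - 3) ∉ A := by
    rw [hA, hpowX, show m - 3 + 2 = m - 1 by omega]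
    exact hne _ (by omega) le_rfl
  have main : A = Ideal.span
      {X 0 ^ (m - 2), X 1 - C γ * X 0 ^ (m - 3), X 0 ^ 2 + 3 * X 0 + 3} := by
    have hle : Ideal.span
        {X 0 ^ (m - 2), X 1 - C γ * X 0 ^ (m - 3), X 0 ^ 2 + 3 * X 0 + 3} ≤ A := by
      rw [Ideal.span_le]
      rintro p (rfl | rfl | rfl)
      exacts [hgenA.1, hgenA.2.1, hgenA.2.2]
    refine le_antisymm (le_of_X_pow_notMem m hm γ hγ0 _ A ?_ ?_ ?_ hle hnot) hle <;>
      exact Ideal.subset_span (by simp)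
  refine ⟨main, fun h0 => ?_⟩
  rw [main, h0]
  simp
end

section
/- The third powers of the normalized generators satisfy x³ = s₂^{F₁(x−1,y−1)} and y³ = s₂^{F₂(x−1,y−1)} with the polynomials F₁ = α·X^{m−3} and F₂ = β·X^{m−3} − X − 3 in ℤ[X,Y], and these polynomials satisfy the Schreier conditions: F₁·X ≡ 0 (mod 𝔄), F₂·Y ≡ 0 (mod 𝔄), F₁·Y ≡ −(X² + 3X + 3) (mod 𝔄), and F₂·X ≡ Y² + 3Y + 3 (mod 𝔄). -/
/-!
The map `Ψ` turns addition into multiplication, so it is determined by its values `wIter x y i j` on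
monomials: `X ^ i ↦ s_{i+2}`, `Y ↦ [s₂,y] = s_{m-1}^γ`, and every other monomial involving `Y` has
trivial image, because `s_{m-1}` commutes with `x` (as `s_m = 1`) and with `y` (if `m = 3`, this is
replaced by `γ = 0`). The formulas for the third powers are then the given relations. Moreover the
annihilator contains `X ^ (m-2)`, `X ^ (m-3) * Y`, `X * Y`, `Y ^ 2`, `3 * Y` (as `s_{m-1} ^ 3 = 1`),
and `X ^ 2 + 3 * X + 3` (the power relation for `s₂`); each Schreier condition is a combination of these.
-/

open MvPolynomial

theorem pcomm_eq_one_iff {G : Type*} [Group G] (a b : G) : pcomm a b = 1 ↔ Commute a b := by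
  rw [pcomm, mul_assoc, ← mul_inv_rev, inv_mul_eq_one, eq_comm]
  rfl

theorem pcomm_one_iterate {G : Type*} [Group G] (a : G) (n : ℕ) :
    (fun t => pcomm t a)^[n] 1 = 1 :=
  Function.iterate_fixed (by simp [pcomm]) n

theorem schreier_conditions_maximal_class_threeGroup
    {G : Type*} [Group G] [Finite G]
    (m : ℕ) (hm : 3 ≤ m)
    (x y : G) (α β γ : ℤ)
    (hα : α = -1 ∨ α = 0 ∨ α = 1) (hβ : β = -1 ∨ β = 0 ∨ β = 1)
    (hγ : γ = -1 ∨ γ = 0 ∨ γ = 1) (hγ0 : m ≤ 4 → γ = 0)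
    (hcard : Nat.card G = 3 ^ m)
    (hgen : Subgroup.closure ({x, y} : Set G) = ⊤)
    (hx3 : x ^ 3 = sSeq x y (m - 1) ^ α)
    (hy3 : y ^ 3 * sSeq x y 2 ^ 3 * sSeq x y 3 = sSeq x y (m - 1) ^ β)
    (hpow : ∀ j, 2 ≤ j → sSeq x y j ^ 3 * sSeq x y (j + 1) ^ 3 * sSeq x y (j + 2) = 1)
    (hc2 : pcomm (sSeq x y 2) y = sSeq x y (m - 1) ^ γ)
    (hcj : ∀ j, 3 ≤ j → pcomm (sSeq x y j) y = 1)
    (hne : ∀ j, 2 ≤ j → j ≤ m - 1 → sSeq x y j ≠ 1)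
    (htriv : ∀ j, m ≤ j → sSeq x y j = 1)
    (hmeta : ∀ i j, 2 ≤ i → 2 ≤ j → pcomm (sSeq x y i) (sSeq x y j) = 1)
    (Ψ : MvPolynomial (Fin 2) ℤ → G)
    (hΨadd : ∀ f g, Ψ (f + g) = Ψ f * Ψ g)
    (hΨmon : ∀ i j : ℕ, Ψ (X 0 ^ i * X 1 ^ j) = wIter x y i j)
    (A : Ideal (MvPolynomial (Fin 2) ℤ))
    (hA : ∀ f, f ∈ A ↔ Ψ f = 1)
    :
    x ^ 3 = Ψ (C α * X 0 ^ (m - 3)) ∧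
    y ^ 3 = Ψ (C β * X 0 ^ (m - 3) - X 0 - 3) ∧
    (C α * X 0 ^ (m - 3)) * X 0 ∈ A ∧
    (C β * X 0 ^ (m - 3) - X 0 - 3) * X 1 ∈ A ∧
    (C α * X 0 ^ (m - 3)) * X 1 + (X 0 ^ 2 + 3 * X 0 + 3) ∈ A ∧
    (C β * X 0 ^ (m - 3) - X 0 - 3) * X 0 - (X 1 ^ 2 + 3 * X 1 + 3) ∈ A := by
  -- `Ψ` as a homomorphism, which gives its values on integer multiples.
  let φ : Multiplicative (MvPolynomial (Fin 2) ℤ) →* G :=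
    MonoidHom.mk' (fun f => Ψ f.toAdd) (fun f g => hΨadd _ _)
  have hzs : ∀ (n : ℤ) f, Ψ (C n * f) = Ψ f ^ n := by
    intro n f
    have h := map_zpow φ (Multiplicative.ofAdd f) n
    rw [← ofAdd_zsmul] at h
    rw [← MvPolynomial.smul_eq_C_mul]
    exact h
  have h3 : (3 : MvPolynomial (Fin 2) ℤ) = C 3 := by simp
  have hX : ∀ i, Ψ (X 0 ^ i) = sSeq x y (i + 2) := by
    intro i
    simpa [wIter, sSeq] using hΨmon i 0
  have hX1 : Ψ (X 0) = sSeq x y 3 := by simpa using hX 1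
  have h1 : Ψ 1 = sSeq x y 2 := by simpa using hX 0
  have hC3 : Ψ 3 = sSeq x y 2 ^ 3 := by
    rw [h3, ← mul_one (C 3), hzs, h1]
    norm_cast
  have hm32 : m - 3 + 2 = m - 1 := by omega
  have hlast_x : Commute (sSeq x y (m - 1)) x := by
    rw [← pcomm_eq_one_iff]
    have h := htriv m le_rfl
    rw [sSeq, show m - 2 = (m - 1 - 2) + 1 by omega, Function.iterate_succ_apply'] at h
    exact h
  have hlast_y : Commute (sSeq x y (m - 1) ^ γ) y := by
    rcases Nat.lt_or_ge 3 m with h | h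
    · exact ((pcomm_eq_one_iff _ _).1 (hcj (m - 1) (by omega))).zpow_left γ
    · simp [hγ0 (by omega)]
  have hlast3 : sSeq x y (m - 1) ^ 3 = 1 := by
    simpa [htriv (m - 1 + 1) (by omega), htriv (m - 1 + 2) (by omega)]
      using hpow (m - 1) (by omega)
  have hc2' : pcomm (pcomm y x) y = sSeq x y (m - 1) ^ γ := hc2
  have hY : Ψ (X 1) = sSeq x y (m - 1) ^ γ := by
    simpa [wIter, hc2'] using hΨmon 0 1
  have hXY : ∀ i, (X 0 ^ (i + 1) * X 1 : MvPolynomial (Fin 2) ℤ) ∈ A := by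
    intro i
    have h := hΨmon (i + 1) 1
    rw [wIter, Function.iterate_succ_apply, Function.iterate_one, hc2',
      (pcomm_eq_one_iff _ _).2 (hlast_x.zpow_left γ), pcomm_one_iterate, pow_one] at h
    exact (hA _).2 h
  have hYY : (X 1 ^ 2 : MvPolynomial (Fin 2) ℤ) ∈ A := by
    have h := hΨmon 0 2
    rw [wIter, Function.iterate_zero, id, Function.iterate_succ_apply, Function.iterate_one, hc2',
      (pcomm_eq_one_iff _ _).2 hlast_y, pow_zero, one_mul] at h
    exact (hA _).2 h
  have h3Y : (3 * X 1 : MvPolynomial (Fin 2) ℤ) ∈ A := by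
    rw [hA, h3, hzs, hY, ← zpow_mul, mul_comm, zpow_mul]
    norm_cast
    rw [hlast3, one_zpow]
  have hXmY : (X 0 ^ (m - 3) * X 1 : MvPolynomial (Fin 2) ℤ) ∈ A := by
    rcases Nat.lt_or_ge 3 m with h | h
    · rw [show m - 3 = (m - 4) + 1 by omega]
      exact hXY _
    · rw [show m - 3 = 0 by omega, pow_zero, one_mul, hA, hY, hγ0 (by omega), zpow_zero]
  have hXm : (X 0 ^ (m - 3) * X 0 : MvPolynomial (Fin 2) ℤ) ∈ A := by
    rw [← pow_succ, hA, hX]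
    exact htriv _ (by omega)
  have hquad : (X 0 ^ 2 + 3 * X 0 + 3 : MvPolynomial (Fin 2) ℤ) ∈ A := by
    rw [show (X 0 ^ 2 + 3 * X 0 + 3 : MvPolynomial (Fin 2) ℤ) = 3 + C 3 * X 0 + X 0 ^ 2 by
      rw [← h3]; ring, hA, hΨadd, hΨadd, hC3, hzs, hX1, hX]
    exact_mod_cast hpow 2 le_rfl
  have hXY1 : (X 0 * X 1 : MvPolynomial (Fin 2) ℤ) ∈ A := by simpa using hXY 0
  refine ⟨?_, ?_, ?_, ?_, ?_, ?_⟩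
  · rw [hzs, hX, hm32, hx3]
  · have h : Ψ (C β * X 0 ^ (m - 3)) = Ψ (C β * X 0 ^ (m - 3) - X 0 - 3) * Ψ 3 * Ψ (X 0) := by
      rw [← hΨadd, ← hΨadd, sub_add_cancel, sub_add_cancel]
    rw [hzs, hX, hm32, hC3, hX1, ← hy3] at h
    exact mul_right_cancel (mul_right_cancel h)
  · rw [mul_assoc]
    exact A.mul_mem_left _ hXm
  · convert A.sub_mem (A.sub_mem (A.mul_mem_left (C β) hXmY) hXY1) h3Y using 1
    ring
  · convert A.add_mem (A.mul_mem_left (C α) hXmY) hquad using 1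
    ring
  · convert A.sub_mem (A.sub_mem (A.sub_mem (A.mul_mem_left (C β) hXm) hquad) hYY) h3Y using 1
    ring
end

section
/- If G has coclass r ≥ 3 (so e = r+1 ≥ 4, order 3^n ≥ 3⁷, nilpotency index 5 ≤ m ≤ n−2, n ≤ 2m−3) and defect k = 0 (equivalently ρ = 0), then the annihilator ideal of G equals 𝔄(G) = 𝔯_{m−2,e−1} := (X^{m−2}, Y^{e−1}, XY, T(X,Y)) as ideals of ℤ[X,Y], where T(X,Y) = X² + 3X + 3 + 3Y + Y². -/
/-!
Write `P = ℤ[X, Y]` and let `𝔯 = (X^{m-2}, Y^{e-1}, XY, T)`. The relations of `G` with `ρ = 0` say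
that each generator of `𝔯` annihilates `s₂`, so `𝔯 ≤ A`, and equality follows by counting.

* The image of `Ψ` contains `[y, x]` and is stable under conjugation by `x` and `y`
  (`conj_mem_range`); the only mixed case is that the `s_j` with `j ≥ 3` commute with `y`. Hence it is
  a normal subgroup with abelian quotient and contains `G'` (`commutator_le_of_closure_pair`), which
  has order `3^{n-2}`.
* `P / 𝔯` has at most `3^{(m-2)+(e-1)-1} = 3^{n-2}` elements (`exists_cover_span`). Indeed, raising
  an exponent in `J_{a,b} = (X^a, Y^b, XY, T)` by one multiplies the index by at most `3`, because
  `X · X^a`, `Y · X^a` and `3 X^a` lie in `J_{a+1,b}`, the last one by multiplying `T` with `X^a`.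

A set of at most `3^{n-2}` representatives modulo `𝔯` is therefore mapped injectively by `Ψ`, so an
element of `A` has the same representative as `0`.
-/


open MvPolynomial

/-- The higher commutators `t₂ = [y,x]`, `t_j = [t_{j-1}, y]` for `j ≥ 3`. -/
def tSeq {G : Type*} [Group G] (x y : G) (j : ℕ) : G :=
  (fun t => pcomm t y)^[j - 2] (pcomm y x)

/-- `σ₃ = y³`, `σ_j = [σ_{j-1}, x]` for `j ≥ 4`. -/
def sigSeq {G : Type*} [Group G] (x y : G) (j : ℕ) : G :=
  (fun t => pcomm t x)^[j - 3] (y ^ 3)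

/-- `τ₃ = x³`, `τ_j = [τ_{j-1}, y]` for `j ≥ 4`. -/
def tauSeq {G : Type*} [Group G] (x y : G) (j : ℕ) : G :=
  (fun t => pcomm t y)^[j - 3] (x ^ 3)

/-- One step of the index count: if `g` is killed modulo `I` by `X`, `Y` and `3`, then the index of
`I` is at most three times the index of any `K` contained in `I + (g)`. An index bound is expressed by a finite set of
representatives. -/
lemma exists_cover_step (I K : Ideal (MvPolynomial (Fin 2) ℤ)) (g : MvPolynomial (Fin 2) ℤ)
    (hK : K ≤ I ⊔ Ideal.span {g}) (hX : X 0 * g ∈ I) (hY : X 1 * g ∈ I) (h3 : 3 * g ∈ I) (N : ℕ)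
    (h : ∃ S : Finset (MvPolynomial (Fin 2) ℤ), S.card ≤ N ∧ ∀ p, ∃ s ∈ S, p - s ∈ K) :
    ∃ S : Finset (MvPolynomial (Fin 2) ℤ), S.card ≤ N * 3 ∧ ∀ p, ∃ s ∈ S, p - s ∈ I := by
  classical
  -- Modulo `I`, every multiple of `g` is one of `0`, `g`, `2g`.
  have key : ∀ q : MvPolynomial (Fin 2) ℤ, ∃ c ∈ Finset.range 3, q * g - (c : ℕ) * g ∈ I := by
    intro q
    have hq : ∃ z : ℤ, q * g - C z * g ∈ I := by
      induction q using MvPolynomial.induction_on with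
      | C a => exact ⟨a, by simp⟩
      | add p q hp hq =>
        obtain ⟨a, ha⟩ := hp
        obtain ⟨b, hb⟩ := hq
        refine ⟨a + b, ?_⟩
        have := I.add_mem ha hb
        rw [C_add]
        convert this using 1
        ring
      | mul_X p i _ =>
        refine ⟨0, ?_⟩
        have hi : X i * g ∈ I := by
          fin_cases i
          · exact hX
          · exact hY
        have := I.mul_mem_left p hi
        rw [C_0]
        convert this using 1
        ring
    obtain ⟨z, hz⟩ := hq
    refine ⟨(z % 3).toNat, ?_, ?_⟩
    · rw [Finset.mem_range]
      omega
    · have h1 : (((z % 3).toNat : ℕ) : MvPolynomial (Fin 2) ℤ) = C (z % 3) := by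
        have : (((z % 3).toNat : ℕ) : ℤ) = z % 3 := by omega
        rw [← map_natCast (C : ℤ →+* MvPolynomial (Fin 2) ℤ), this]
      have h2 : (C z : MvPolynomial (Fin 2) ℤ) = C (z % 3) + 3 * C (z / 3) := by
        conv_lhs => rw [← Int.emod_add_mul_ediv z 3]
        simp
      rw [h1]
      have := I.add_mem hz (I.mul_mem_left (C (z / 3)) h3)
      rw [h2] at this
      convert this using 1
      ring
  obtain ⟨S, hS, hcov⟩ := h
  refine ⟨(S ×ˢ Finset.range 3).image fun t => t.1 + (t.2 : MvPolynomial (Fin 2) ℤ) * g, ?_, ?_⟩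
  · refine Finset.card_image_le.trans ?_
    rw [Finset.card_product, Finset.card_range]
    exact Nat.mul_le_mul_right 3 hS
  · intro p
    obtain ⟨s, hs, hps⟩ := hcov p
    obtain ⟨i, hi, w, hw, hiw⟩ := Submodule.mem_sup.1 (hK hps)
    obtain ⟨q, rfl⟩ := Ideal.mem_span_singleton'.1 hw
    obtain ⟨c, hc, hqc⟩ := key q
    refine ⟨s + c * g, Finset.mem_image.2 ⟨(s, c), Finset.mk_mem_product hs hc, rfl⟩, ?_⟩
    have := I.add_mem hi hqc
    convert this using 1
    linear_combination -hiw

/-- The ideal `(X^a, Y^b, XY, T)` of `ℤ[X, Y]`, where `T = X² + 3X + 3 + 3Y + Y²`. -/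
noncomputable def ridgeIdeal (a b : ℕ) : Ideal (MvPolynomial (Fin 2) ℤ) :=
  Ideal.span {X 0 ^ a, X 1 ^ b, X 0 * X 1, X 0 ^ 2 + 3 * X 0 + 3 + 3 * X 1 + X 1 ^ 2}

lemma ridge_X (a b : ℕ) : X 0 ^ a ∈ ridgeIdeal a b := Ideal.subset_span (by simp)

lemma ridge_Y (a b : ℕ) : X 1 ^ b ∈ ridgeIdeal a b := Ideal.subset_span (by simp)

lemma ridge_XY (a b : ℕ) : X 0 * X 1 ∈ ridgeIdeal a b := Ideal.subset_span (by simp)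

lemma ridge_T (a b : ℕ) :
    X 0 ^ 2 + 3 * X 0 + 3 + 3 * X 1 + X 1 ^ 2 ∈ ridgeIdeal a b := Ideal.subset_span (by simp)

lemma ridge_le (a b : ℕ) (K : Ideal (MvPolynomial (Fin 2) ℤ)) (h1 : X 0 ^ a ∈ K)
    (h2 : X 1 ^ b ∈ K) (h3 : X 0 * X 1 ∈ K)
    (h4 : X 0 ^ 2 + 3 * X 0 + 3 + 3 * X 1 + X 1 ^ 2 ∈ K) : ridgeIdeal a b ≤ K := by
  refine Ideal.span_le.2 ?_
  rintro p (rfl | rfl | rfl | rfl)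
  · exact h1
  · exact h2
  · exact h3
  · exact h4

/-- The index of `(X^{a+1}, Y^{b+1}, XY, T)` in `ℤ[X, Y]` is at most `3^{a+b+1}`. -/
lemma exists_cover_span (a b : ℕ) : ∃ S : Finset (MvPolynomial (Fin 2) ℤ),
    S.card ≤ 3 ^ (a + b + 1) ∧ ∀ p, ∃ s ∈ S, p - s ∈ ridgeIdeal (a + 1) (b + 1) := by
  induction a with
  | zero =>
    induction b with
    | zero =>
      have hx : (X 0 : MvPolynomial (Fin 2) ℤ) ∈ ridgeIdeal 1 1 := by simpa using ridge_X 1 1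
      have hy : (X 1 : MvPolynomial (Fin 2) ℤ) ∈ ridgeIdeal 1 1 := by simpa using ridge_Y 1 1
      refine exists_cover_step _ ⊤ 1 (by simp) (by simpa using hx) (by simpa using hy) ?_ 1
        ⟨{0}, by simp, fun p => ⟨0, by simp, trivial⟩⟩
      have h1 := (ridgeIdeal 1 1).mul_mem_left (X 0 + 3) hx
      have h2 := (ridgeIdeal 1 1).mul_mem_left (X 1 + 3) hy
      have := (ridgeIdeal 1 1).sub_mem ((ridgeIdeal 1 1).sub_mem (ridge_T 1 1) h1) h2
      convert this using 1
      ring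
    | succ b ih =>
      have hxy := ridge_XY (0 + 1) (b + 1 + 1)
      have hy := ridge_Y (0 + 1) (b + 1 + 1)
      have hT := ridge_T (0 + 1) (b + 1 + 1)
      have hx := ridge_X (0 + 1) (b + 1 + 1)
      set I := ridgeIdeal (0 + 1) (b + 1 + 1)
      refine exists_cover_step I _ (X 1 ^ (b + 1)) ?_ ?_ ?_ ?_ _ ih
      · exact ridge_le _ _ _ (Ideal.mem_sup_left hx)
          (Ideal.mem_sup_right (Ideal.mem_span_singleton_self _)) (Ideal.mem_sup_left hxy)
          (Ideal.mem_sup_left hT)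
      · convert I.mul_mem_left (X 1 ^ b) hxy using 1
        ring
      · convert hy using 1
        ring
      · convert I.sub_mem (I.sub_mem (I.mul_mem_left (X 1 ^ (b + 1)) hT)
          (I.mul_mem_left (X 1 ^ b * (X 0 + 3)) hxy)) (I.mul_mem_left (X 1 + 3) hy) using 1
        ring
  | succ a ih =>
    have hxy := ridge_XY (a + 1 + 1) (b + 1)
    have hy := ridge_Y (a + 1 + 1) (b + 1)
    have hT := ridge_T (a + 1 + 1) (b + 1)
    have hx := ridge_X (a + 1 + 1) (b + 1)
    set I := ridgeIdeal (a + 1 + 1) (b + 1)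
    rw [show a + 1 + b + 1 = (a + b + 1) + 1 by ring, pow_succ]
    refine exists_cover_step I _ (X 0 ^ (a + 1)) ?_ ?_ ?_ ?_ _ ih
    · exact ridge_le _ _ _ (Ideal.mem_sup_right (Ideal.mem_span_singleton_self _))
        (Ideal.mem_sup_left hy) (Ideal.mem_sup_left hxy) (Ideal.mem_sup_left hT)
    · convert hx using 1
      ring
    · convert I.mul_mem_left (X 0 ^ a) hxy using 1
      ring
    · convert I.sub_mem (I.sub_mem (I.mul_mem_left (X 0 ^ (a + 1)) hT)
        (I.mul_mem_left (X 0 ^ a * (X 1 + 3)) hxy)) (I.mul_mem_left (X 0 + 3) hx) using 1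
      ring

/-- In a group generated by `x` and `y`, a normal subgroup containing `[y, x]` contains the
commutator subgroup. -/
lemma commutator_le_of_closure_pair {G : Type*} [Group G] (x y : G)
    (hgen : Subgroup.closure ({x, y} : Set G) = ⊤) (H : Subgroup G) [H.Normal]
    (hH : pcomm y x ∈ H) : commutator G ≤ H := by
  have hq : (QuotientGroup.mk y : G ⧸ H) * QuotientGroup.mk x =
      QuotientGroup.mk x * QuotientGroup.mk y := by
    rw [← QuotientGroup.mk_mul, ← QuotientGroup.mk_mul]
    refine (QuotientGroup.eq.2 ?_).symm
    simpa [pcomm, mul_assoc] using hH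
  have hc : ∀ g h : G, (QuotientGroup.mk g : G ⧸ H) * QuotientGroup.mk h =
      QuotientGroup.mk h * QuotientGroup.mk g := by
    intro g h
    have hg : g ∈ Subgroup.closure ({x, y} : Set G) := hgen ▸ Subgroup.mem_top g
    have hh : h ∈ Subgroup.closure ({x, y} : Set G) := hgen ▸ Subgroup.mem_top h
    change Commute (QuotientGroup.mk' H g) (QuotientGroup.mk' H h)
    induction hg, hh using Subgroup.closure_induction₂ with
    | mem a b ha hb =>
      rcases ha with rfl | rfl <;> rcases hb with rfl | rfl
      · exact Commute.refl _
      · exact hq.symm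
      · exact hq
      · exact Commute.refl _
    | one_left => rw [map_one]; exact Commute.one_left _
    | one_right => rw [map_one]; exact Commute.one_right _
    | mul_left _ _ _ _ _ _ h1 h2 => rw [map_mul]; exact h1.mul_left h2
    | mul_right _ _ _ _ _ _ h1 h2 => rw [map_mul]; exact h1.mul_right h2
    | inv_left _ _ _ _ h1 => rw [map_inv]; exact h1.inv_left
    | inv_right _ _ _ _ h1 => rw [map_inv]; exact h1.inv_right
  rw [commutator_def, Subgroup.commutator_le]
  intro g _ h _
  rw [← QuotientGroup.eq_one_iff, commutatorElement_def]
  simp only [QuotientGroup.mk_mul, QuotientGroup.mk_inv]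
  rw [hc g h]
  group

/-- Stability of the image of `φ` under conjugation can be tested on the monomials `X^i Y^j`. -/
lemma conj_mem_range {G : Type*} [Group G] (φ : Multiplicative (MvPolynomial (Fin 2) ℤ) →* G)
    (z : G) (hz : ∀ i j : ℕ,
      z⁻¹ * φ (Multiplicative.ofAdd (X 0 ^ i * X 1 ^ j)) * z ∈ φ.range) :
    ∀ h ∈ φ.range, z⁻¹ * h * z ∈ φ.range := by
  rintro _ ⟨f, rfl⟩
  induction f using Multiplicative.rec with | _ f
  induction f using MvPolynomial.induction_on' with
  | monomial u a =>
    have h1 : monomial u a = a • (X 0 ^ u 0 * X 1 ^ u 1 : MvPolynomial (Fin 2) ℤ) := by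
      rw [monomial_eq, Finsupp.prod_fintype _ _ (by simp), Fin.prod_univ_two, zsmul_eq_mul]
      simp
    have h2 := φ.range.zpow_mem (hz (u 0) (u 1)) a
    have h3 := conj_zpow (i := a) (a := z⁻¹)
      (b := φ (Multiplicative.ofAdd (X 0 ^ u 0 * X 1 ^ u 1)))
    rw [inv_inv] at h3
    rw [h3] at h2
    rw [h1]
    change z⁻¹ * φ (Multiplicative.ofAdd (a • _)) * z ∈ _
    rw [ofAdd_zsmul, map_zpow]
    exact h2
  | add p q hp hq =>
    have h1 := φ.range.mul_mem hp hq
    change z⁻¹ * φ (Multiplicative.ofAdd p * Multiplicative.ofAdd q) * z ∈ _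
    rw [map_mul]
    convert h1 using 1
    simp only [mul_assoc, mul_inv_cancel_left]

theorem annihilator_coclass_ge_three_defect_zero
    {G : Type*} [Group G] [Finite G]
    (m n e k : ℕ) (x y : G) (α β γ δ ρ : ℤ)
    (hm : 4 ≤ m) (hmn : m < n) (hn2m : n ≤ 2 * m - 3) (he : e = n - m + 2) (he3 : 3 ≤ e)
    (hk : k ≤ 1) (hkrho : k = 0 ↔ ρ = 0)
    (hα : α = -1 ∨ α = 0 ∨ α = 1) (hβ : β = -1 ∨ β = 0 ∨ β = 1)
    (hγ : γ = -1 ∨ γ = 0 ∨ γ = 1) (hδ : δ = -1 ∨ δ = 0 ∨ δ = 1)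
    (hρ : ρ = -1 ∨ ρ = 0 ∨ ρ = 1)
    (hcard : Nat.card G = 3 ^ n)
    (hab : Nat.card (G ⧸ commutator G) = 9)
    (habel : ∀ a ∈ commutator G, ∀ b ∈ commutator G, a * b = b * a)
    (hgen : Subgroup.closure ({x, y} : Set G) = ⊤)
    (hR1s : ∀ i, 3 ≤ i → sSeq x y i ^ 3 * sSeq x y (i + 1) ^ 3 * sSeq x y (i + 2) = 1)
    (hR1t : ∀ i, 3 ≤ i → tSeq x y i ^ 3 * tSeq x y (i + 1) ^ 3 * tSeq x y (i + 2) = 1)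
    (hR2sig : ∀ j, 3 ≤ j → sigSeq x y j ^ 3 * sigSeq x y (j + 1) ^ 3 * sigSeq x y (j + 2) = 1)
    (hR2tau : ∀ j, 3 ≤ j → tauSeq x y j ^ 3 * tauSeq x y (j + 1) ^ 3 * tauSeq x y (j + 2) = 1)
    (hR3s : sSeq x y 2 ^ 3 * sSeq x y 3 ^ 3 * sSeq x y 4 = (tauSeq x y 4)⁻¹)
    (hR3t : tSeq x y 2 ^ 3 * tSeq x y 3 ^ 3 * tSeq x y 4 = sigSeq x y 4)
    (hR4sig : ∀ j, 3 ≤ j → pcomm (sigSeq x y j) y = 1)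
    (hR4tau : ∀ j, 3 ≤ j → pcomm (tauSeq x y j) x = 1)
    (hR5a : ∀ i, 3 ≤ i → i ≤ m - 1 → sigSeq x y i ≠ 1)
    (hR5b : ∀ i, m ≤ i → sigSeq x y i = 1)
    (hR6a : ∀ j, 3 ≤ j → j ≤ e + k → tauSeq x y j ≠ 1)
    (hR6b : ∀ j, e + k + 1 ≤ j → tauSeq x y j = 1)
    (hR7sig : ∀ i, 5 ≤ i → sigSeq x y i = sSeq x y (i - 2) ^ 3)
    (hR7tau : ∀ i, 5 ≤ i → tauSeq x y i = tSeq x y (i - 2) ^ (-3 : ℤ))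
    (hR8s : ∀ j, 5 ≤ j → sSeq x y j = (sigSeq x y j)⁻¹ * (sigSeq x y (j + 1))⁻¹)
    (hR8t : ∀ j, 5 ≤ j → tSeq x y j = tauSeq x y j * tauSeq x y (j + 1))
    (hR9s : pcomm (sSeq x y 3) y = sigSeq x y (m - 1) ^ (-(ρ * δ)))
    (hR9t : pcomm (tSeq x y 3) x = sigSeq x y (m - 1) ^ (-(ρ * δ)))
    (hR10 : sSeq x y 2 ^ 3 * (sSeq x y 3 * tSeq x y 3) ^ 3 * sSeq x y 4 * tSeq x y 4 =
      sigSeq x y (m - 1) ^ (ρ * β))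
    (hR11 : tauSeq x y (e + 1) = sigSeq x y (m - 1) ^ (-ρ))
    (hR12 : sSeq x y 4 * sigSeq x y 4 * sigSeq x y 5 = sigSeq x y (m - 1) ^ (ρ * β))
    (hR13 : sSeq x y 3 * sigSeq x y 3 * sigSeq x y 4 =
      sigSeq x y (m - 2) ^ (ρ * β) * sigSeq x y (m - 1) ^ γ * tauSeq x y e ^ δ)
    (hR14 : (tSeq x y 3)⁻¹ * tauSeq x y 3 * tauSeq x y 4 =
      sigSeq x y (m - 2) ^ (ρ * δ) * sigSeq x y (m - 1) ^ α * tauSeq x y e ^ β)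
    (hk0 : k = 0) (hrho0 : ρ = 0) (he4 : 4 ≤ e) (hm5 : 5 ≤ m) (hmn2 : m ≤ n - 2)
    (Ψ : MvPolynomial (Fin 2) ℤ → G)
    (hΨadd : ∀ f g, Ψ (f + g) = Ψ f * Ψ g)
    (hΨmon : ∀ i j : ℕ, Ψ (X 0 ^ i * X 1 ^ j) = wIter x y i j)
    (A : Ideal (MvPolynomial (Fin 2) ℤ))
    (hA : ∀ f, f ∈ A ↔ Ψ f = 1)
    :
    A = Ideal.span {X 0 ^ (m - 2), X 1 ^ (e - 1), X 0 * X 1,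
      X 0 ^ 2 + 3 * X 0 + 3 + 3 * X 1 + X 1 ^ 2} := by
  subst hrho0 hk0
  simp only [zero_mul, neg_zero, zpow_zero] at hR9s hR9t hR10 hR12
  let φ : Multiplicative (MvPolynomial (Fin 2) ℤ) →* G :=
    MonoidHom.mk' (fun f => Ψ f.toAdd) fun f g => hΨadd f.toAdd g.toAdd
  have hφ : ∀ f, φ (Multiplicative.ofAdd f) = Ψ f := fun f => rfl
  have hΨpow : ∀ (k : ℕ) f, Ψ (k * f) = Ψ f ^ k := by
    intro k f
    rw [← hφ, ← hφ, ← nsmul_eq_mul, ofAdd_nsmul, map_pow]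
  have hΨs : ∀ i, Ψ (X 0 ^ i) = sSeq x y (i + 2) := by
    intro i
    have := hΨmon i 0
    rwa [pow_zero, mul_one] at this
  have hΨt : ∀ j, Ψ (X 1 ^ j) = tSeq x y (j + 2) := by
    intro j
    have := hΨmon 0 j
    rwa [pow_zero, one_mul] at this
  have hXY : (X 0 * X 1 : MvPolynomial (Fin 2) ℤ) ∈ A := by
    rw [hA]
    have := hΨmon 1 1
    rw [pow_one, pow_one] at this
    rw [this]
    exact hR9t
  have hle : ridgeIdeal (m - 2) (e - 1) ≤ A := by
    refine ridge_le _ _ _ ?_ ?_ hXY ?_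
    · rw [hA, hΨs, show m - 2 + 2 = m by omega, hR8s m (by omega), hR5b m le_rfl,
        hR5b (m + 1) (by omega)]
      simp
    · rw [hA, hΨt, show e - 1 + 2 = e + 1 by omega, hR8t (e + 1) (by omega),
        hR6b (e + 1) (by omega), hR6b (e + 1 + 1) (by omega)]
      simp
    · rw [hA, ← hR10]
      have h0 := hΨs 0
      have h1 := hΨs 1
      have h2 := hΨs 2
      have h3 := hΨt 1
      have h4 := hΨt 2
      simp only [Nat.reduceAdd] at h0 h1 h2 h3 h4
      rw [← h0, ← h1, ← h2, ← h3, ← h4, ← hΨadd, ← hΨpow, ← hΨpow, ← hΨadd, ← hΨadd, ← hΨadd]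
      congr 1
      push_cast
      ring
  -- `s_j` commutes with `y` for all `j ≥ 3`; for `j ≥ 4` it is a product of inverses of `σ`'s.
  have hsy : ∀ i, pcomm (sSeq x y (i + 3)) y = 1 := by
    have hcomm : ∀ a : G, pcomm a y = 1 ↔ Commute a y := by
      intro a
      rw [pcomm, mul_assoc, ← mul_inv_rev, inv_mul_eq_one]
      exact eq_comm
    have hσ : ∀ j, 3 ≤ j → Commute (sigSeq x y j) y := fun j hj => (hcomm _).1 (hR4sig j hj)
    intro i
    match i with
    | 0 => exact hR9s
    | 1 =>
      rw [hcomm]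
      have h4 : sSeq x y 4 = (sigSeq x y 4 * sigSeq x y 5)⁻¹ := by
        rw [eq_inv_iff_mul_eq_one, ← mul_assoc]
        exact hR12
      rw [h4]
      exact ((hσ 4 (by omega)).mul_left (hσ 5 (by omega))).inv_left
    | i + 2 =>
      rw [hcomm, hR8s (i + 2 + 3) (by omega)]
      exact (hσ _ (by omega)).inv_left.mul_left (hσ _ (by omega)).inv_left
  have hconj : ∀ a z : G, z⁻¹ * a * z = a * pcomm a z := by
    intro a z
    simp [pcomm, mul_assoc]
  have hx : ∀ h ∈ φ.range, x⁻¹ * h * x ∈ φ.range := by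
    refine conj_mem_range φ x fun i j => ?_
    rw [hconj]
    refine mul_mem ⟨_, rfl⟩ ⟨Multiplicative.ofAdd (X 0 ^ (i + 1) * X 1 ^ j), ?_⟩
    rw [hφ, hφ, hΨmon, hΨmon]
    exact Function.iterate_succ_apply' _ _ _
  have hy : ∀ h ∈ φ.range, y⁻¹ * h * y ∈ φ.range := by
    refine conj_mem_range φ y fun i j => ?_
    rw [hconj]
    refine mul_mem ⟨_, rfl⟩ ?_
    rw [hφ]
    match i, j with
    | 0, j =>
      refine ⟨Multiplicative.ofAdd (X 0 ^ 0 * X 1 ^ (j + 1)), ?_⟩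
      rw [hφ, hΨmon, hΨmon]
      exact Function.iterate_succ_apply' _ _ _
    | i + 1, 0 =>
      rw [pow_zero, mul_one, hΨs, hsy i]
      exact one_mem _
    | i + 1, j + 1 =>
      have : (X 0 ^ (i + 1) * X 1 ^ (j + 1) : MvPolynomial (Fin 2) ℤ) ∈ A := by
        convert A.mul_mem_left (X 0 ^ i * X 1 ^ j) hXY using 1
        ring
      rw [(hA _).1 this]
      simp [pcomm]
  have hnormal : φ.range.Normal := by
    have hN : ∀ z, (∀ h ∈ φ.range, z⁻¹ * h * z ∈ φ.range) →
        z ∈ Subgroup.normalizer (φ.range : Set G) := by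
      intro z hz
      rw [← inv_mem_iff]
      -- In a finite group, stability under one conjugation suffices.
      refine Subgroup.mem_normalizer_fintype fun h hh => ?_
      rw [inv_inv]
      exact hz h hh
    rw [← Subgroup.normalizer_eq_top_iff, eq_top_iff, ← hgen, Subgroup.closure_le]
    rintro z (rfl | rfl)
    · exact hN _ hx
    · exact hN _ hy
  have hcomm : commutator G ≤ φ.range := by
    refine commutator_le_of_closure_pair x y hgen _ ⟨Multiplicative.ofAdd (X 0 ^ 0), ?_⟩
    rw [hφ, hΨs]
    rfl
  have hcardG' : 3 ^ (n - 2) ≤ Nat.card φ.range := by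
    have h1 := Subgroup.card_eq_card_quotient_mul_card_subgroup (commutator G)
    rw [hab, hcard] at h1
    have h2 : 3 ^ n = 9 * 3 ^ (n - 2) := by
      conv_lhs => rw [show n = 2 + (n - 2) by omega, pow_add]
      norm_num
    have h3 : Nat.card (commutator G) ≤ Nat.card φ.range :=
      Nat.card_le_card_of_injective _ (Subgroup.inclusion_injective hcomm)
    omega
  obtain ⟨S, hS, hcov⟩ := exists_cover_span (m - 3) (e - 2)
  rw [show m - 3 + 1 = m - 2 by omega, show e - 2 + 1 = e - 1 by omega] at hcov
  rw [show m - 3 + (e - 2) + 1 = n - 2 by omega] at hS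
  have hΨeq : ∀ p q, p - q ∈ ridgeIdeal (m - 2) (e - 1) → Ψ p = Ψ q := by
    intro p q hpq
    have h1 := hΨadd (p - q) q
    rwa [(hA _).1 (hle hpq), one_mul, sub_add_cancel] at h1
  -- `S` surjects onto the image of `Ψ`, which is at least as large, so `Ψ` is injective on `S`.
  have hinj : Set.InjOn Ψ S := by
    classical
    rw [← Finset.card_image_iff]
    refine le_antisymm Finset.card_image_le (hS.trans (hcardG'.trans ?_))
    rw [← SetLike.coe_sort_coe, Nat.card_coe_set_eq, ← Set.ncard_coe_finset]
    refine Set.ncard_le_ncard ?_ (Finset.finite_toSet _)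
    rintro _ ⟨f, rfl⟩
    obtain ⟨s, hs, hfs⟩ := hcov f.toAdd
    exact Finset.mem_coe.2 (Finset.mem_image.2 ⟨s, hs, (hΨeq _ _ hfs).symm⟩)
  refine le_antisymm (fun f hf => ?_) hle
  change f ∈ ridgeIdeal (m - 2) (e - 1)
  obtain ⟨s, hs, hfs⟩ := hcov f
  obtain ⟨s', hs', hs0⟩ := hcov 0
  have hss : s = s' := hinj hs hs' (by
    rw [← hΨeq _ _ hfs, ← hΨeq _ _ hs0, (hA f).1 hf, (hA 0).1 A.zero_mem])
  subst hss
  have := (ridgeIdeal (m - 2) (e - 1)).sub_mem hfs hs0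
  convert this using 1
  ring
end

section
/- For the exceptional groups with m = 5, n = 6, e = 3, defect k = 1 and relational parameters β = δ = ρ = 1 (the four groups ⟨729,44⟩,…,⟨729,47⟩ of transfer kernel type H.4), the annihilator ideal equals 𝔄(G) = (X², Y², XY + 3) as ideals of ℤ[X,Y], and the additive group underlying the residue class ring ℤ[X,Y]/𝔄(G), with basis formed by the residue classes of (1, X, Y), is an abelian group of type (9, 3, 3), i.e. isomorphic to C₉ × C₃ × C₃. -/
/-!
Write `s = [y,x]` and `s₄`, `t₃`, `t₄`, `σ₄` for the terms of `sSeq`, `tSeq`, `sigSeq`. For the given parameters the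
relations collapse to `s₄ = t₄ = 1`, `s ^ 3 = σ₄`, `[t₃, x] = σ₄⁻¹`, while `σ₄ ≠ 1 = σ₄ ^ 3`. Hence
`X²`, `Y²` and `XY + 3` annihilate `s`, and `s` has order exactly `9`.

Modulo `I = (X², Y², XY + 3)` every polynomial is congruent to some `a + bX + cY`
(`exists_reduced_form`), and `9, 3X, 3Y ∈ I` (`relations_mem`). Conversely, let `A ⊇ I` be an ideal
whose integer constants are exactly the multiples of `9`, and let `a + bX + cY ∈ A`. Multiplying by
`XY`, by `Y` and by `X` gives in turn `3 ∣ a`, `3 ∣ b`, `3 ∣ c`, and then `9 ∣ a`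
(`reduced_form_mem_iff`). So `A = I`, and the quotient is `C₉ × C₃ × C₃` on the classes of
`1, X, Y`.
-/

open MvPolynomial

/-! ### Normal forms modulo `(X², Y², XY + 3)` -/

/-- The ideal `(X², Y², XY + 3)` of `ℤ[X,Y]`. -/
noncomputable def relIdeal : Ideal (MvPolynomial (Fin 2) ℤ) :=
  Ideal.span {X 0 ^ 2, X 1 ^ 2, X 0 * X 1 + 3}

/-- The polynomial `a + bX + cY`, the normal form modulo `relIdeal`. -/
noncomputable def linForm (a b c : ℤ) : MvPolynomial (Fin 2) ℤ :=
  Int.cast a + Int.cast b * X 0 + Int.cast c * X 1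

theorem relIdeal_gens :
    (X 0 ^ 2 : MvPolynomial (Fin 2) ℤ) ∈ relIdeal ∧
      (X 1 ^ 2 : MvPolynomial (Fin 2) ℤ) ∈ relIdeal ∧
      (X 0 * X 1 + 3 : MvPolynomial (Fin 2) ℤ) ∈ relIdeal :=
  ⟨Ideal.subset_span (by simp), Ideal.subset_span (by simp), Ideal.subset_span (by simp)⟩

theorem relations_mem :
    (3 * X 0 : MvPolynomial (Fin 2) ℤ) ∈ relIdeal ∧
      (3 * X 1 : MvPolynomial (Fin 2) ℤ) ∈ relIdeal ∧
      (9 : MvPolynomial (Fin 2) ℤ) ∈ relIdeal := by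
  obtain ⟨h1, h2, h3⟩ := relIdeal_gens
  refine ⟨?_, ?_, ?_⟩
  · have := relIdeal.sub_mem (relIdeal.mul_mem_left (X 0) h3) (relIdeal.mul_mem_left (X 1) h1)
    convert this using 1; ring
  · have := relIdeal.sub_mem (relIdeal.mul_mem_left (X 1) h3) (relIdeal.mul_mem_left (X 0) h2)
    convert this using 1; ring
  · have := relIdeal.add_mem (relIdeal.mul_mem_left (3 - X 0 * X 1) h3)
      (relIdeal.mul_mem_left (X 1 ^ 2) h1)
    convert this using 1; ring

theorem exists_reduced_form (f : MvPolynomial (Fin 2) ℤ) :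
    ∃ a b c : ℤ, f - linForm a b c ∈ relIdeal := by
  obtain ⟨h1, h2, h3⟩ := relIdeal_gens
  induction f using MvPolynomial.induction_on with
  | C a => exact ⟨a, 0, 0, by simp [linForm]⟩
  | add p q hp hq =>
    obtain ⟨a, b, c, h⟩ := hp
    obtain ⟨a', b', c', h'⟩ := hq
    refine ⟨a + a', b + b', c + c', ?_⟩
    convert relIdeal.add_mem h h' using 1
    simp only [linForm]; push_cast; ring
  | mul_X p i hp =>
    obtain ⟨a, b, c, h⟩ := hp
    fin_cases i
    -- `(a + bX + cY)X ≡ aX - 3c`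
    · refine ⟨-3 * c, a, 0, ?_⟩
      have := relIdeal.add_mem (relIdeal.mul_mem_left (X 0) h) (relIdeal.add_mem
        (relIdeal.mul_mem_left (b : MvPolynomial (Fin 2) ℤ) h1)
        (relIdeal.mul_mem_left (c : MvPolynomial (Fin 2) ℤ) h3))
      convert this using 1
      simp only [linForm]; push_cast; ring
    -- `(a + bX + cY)Y ≡ aY - 3b`
    · refine ⟨-3 * b, 0, a, ?_⟩
      have := relIdeal.add_mem (relIdeal.mul_mem_left (X 1) h) (relIdeal.add_mem
        (relIdeal.mul_mem_left (c : MvPolynomial (Fin 2) ℤ) h2)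
        (relIdeal.mul_mem_left (b : MvPolynomial (Fin 2) ℤ) h3))
      convert this using 1
      simp only [linForm]; push_cast; ring

theorem reduced_form_mem_relIdeal {a b c : ℤ} (ha : 9 ∣ a) (hb : 3 ∣ b) (hc : 3 ∣ c) :
    linForm a b c ∈ relIdeal := by
  obtain ⟨h1, h2, h3⟩ := relations_mem
  obtain ⟨a, rfl⟩ := ha
  obtain ⟨b, rfl⟩ := hb
  obtain ⟨c, rfl⟩ := hc
  have := relIdeal.add_mem (relIdeal.add_mem
    (relIdeal.mul_mem_left (a : MvPolynomial (Fin 2) ℤ) h3)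
    (relIdeal.mul_mem_left (b : MvPolynomial (Fin 2) ℤ) h1))
    (relIdeal.mul_mem_left (c : MvPolynomial (Fin 2) ℤ) h2)
  convert this using 1
  simp only [linForm]; push_cast; ring

theorem reduced_form_mem_iff {A : Ideal (MvPolynomial (Fin 2) ℤ)} (hI : relIdeal ≤ A)
    (hZ : ∀ a : ℤ, (a : MvPolynomial (Fin 2) ℤ) ∈ A ↔ 9 ∣ a) (a b c : ℤ) :
    linForm a b c ∈ A ↔ 9 ∣ a ∧ 3 ∣ b ∧ 3 ∣ c := by
  refine ⟨fun h => ?_, fun h => hI (reduced_form_mem_relIdeal h.1 h.2.1 h.2.2)⟩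
  obtain ⟨h1, h2, h3⟩ := relIdeal_gens
  obtain ⟨h4, h5, h6⟩ := relations_mem
  have ha : (3 : ℤ) ∣ a := by
    -- `XY(a + bX + cY) ≡ aXY ≡ -3a`
    have key : ((3 * a : ℤ) : MvPolynomial (Fin 2) ℤ) ∈ A := by
      have := A.sub_mem (A.add_mem (A.add_mem
        (A.mul_mem_left (a : MvPolynomial (Fin 2) ℤ) (hI h3))
        (A.mul_mem_left ((b : MvPolynomial (Fin 2) ℤ) * X 1) (hI h1)))
        (A.mul_mem_left ((c : MvPolynomial (Fin 2) ℤ) * X 0) (hI h2)))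
        (A.mul_mem_left (X 0 * X 1) h)
      convert this using 1
      simp only [linForm]; push_cast; ring
    rw [hZ] at key
    omega
  have hb : (3 : ℤ) ∣ b := by
    -- `Y(a + bX + cY) ≡ bXY ≡ -3b`, since `3 ∣ a` and `3Y ≡ 0`
    have key : ((3 * b : ℤ) : MvPolynomial (Fin 2) ℤ) ∈ A := by
      obtain ⟨d, rfl⟩ := ha
      have := A.sub_mem (A.add_mem (A.add_mem
        (A.mul_mem_left (b : MvPolynomial (Fin 2) ℤ) (hI h3))
        (A.mul_mem_left (d : MvPolynomial (Fin 2) ℤ) (hI h5)))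
        (A.mul_mem_left (c : MvPolynomial (Fin 2) ℤ) (hI h2)))
        (A.mul_mem_left (X 1) h)
      convert this using 1
      simp only [linForm]; push_cast; ring
    rw [hZ] at key
    omega
  have hc : (3 : ℤ) ∣ c := by
    -- `X(a + bX + cY) ≡ cXY ≡ -3c`, since `3 ∣ a` and `3X ≡ 0`
    have key : ((3 * c : ℤ) : MvPolynomial (Fin 2) ℤ) ∈ A := by
      obtain ⟨d, rfl⟩ := ha
      have := A.sub_mem (A.add_mem (A.add_mem
        (A.mul_mem_left (c : MvPolynomial (Fin 2) ℤ) (hI h3))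
        (A.mul_mem_left (d : MvPolynomial (Fin 2) ℤ) (hI h4)))
        (A.mul_mem_left (b : MvPolynomial (Fin 2) ℤ) (hI h1)))
        (A.mul_mem_left (X 0) h)
      convert this using 1
      simp only [linForm]; push_cast; ring
    rw [hZ] at key
    omega
  refine ⟨?_, hb, hc⟩
  rw [← hZ]
  have h0 := hI (reduced_form_mem_relIdeal (dvd_zero 9) hb hc)
  have := A.sub_mem h h0
  convert this using 1
  simp only [linForm]; push_cast; ring

/-! ### The residue class ring -/

/-- An ideal containing `X²`, `Y²`, `XY + 3` whose integer constants are the multiples of `9` is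
generated by these three polynomials, and its residue class ring is additively `C₉ × C₃ × C₃` with
basis `1, X, Y`. -/
theorem quotient_structure {A : Ideal (MvPolynomial (Fin 2) ℤ)} (hI : relIdeal ≤ A)
    (hZ : ∀ a : ℤ, (a : MvPolynomial (Fin 2) ℤ) ∈ A ↔ 9 ∣ a) :
    A = Ideal.span {X 0 ^ 2, X 1 ^ 2, X 0 * X 1 + 3} ∧
    Nonempty ((MvPolynomial (Fin 2) ℤ ⧸ A) ≃+ (ZMod 9 × ZMod 3 × ZMod 3)) ∧
    addOrderOf (Ideal.Quotient.mk A 1) = 9 ∧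
    addOrderOf (Ideal.Quotient.mk A (X 0)) = 3 ∧
    addOrderOf (Ideal.Quotient.mk A (X 1)) = 3 ∧
    (∀ q : MvPolynomial (Fin 2) ℤ ⧸ A, ∃ a b c : ℤ,
      q = a • Ideal.Quotient.mk A 1 + b • Ideal.Quotient.mk A (X 0) +
        c • Ideal.Quotient.mk A (X 1)) := by
  have hmem := reduced_form_mem_iff hI hZ
  have hcomb : ∀ a b c : ℤ, a • Ideal.Quotient.mk A 1 + b • Ideal.Quotient.mk A (X 0) +
      c • Ideal.Quotient.mk A (X 1) = Ideal.Quotient.mk A (linForm a b c) := by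
    intro a b c
    simp [linForm, zsmul_eq_mul]
  have hzero : ∀ a b c : ℤ, a • Ideal.Quotient.mk A 1 + b • Ideal.Quotient.mk A (X 0) +
      c • Ideal.Quotient.mk A (X 1) = 0 ↔ 9 ∣ a ∧ 3 ∣ b ∧ 3 ∣ c := by
    intro a b c
    rw [hcomb, Ideal.Quotient.eq_zero_iff_mem, hmem]
  have hspan : ∀ q : MvPolynomial (Fin 2) ℤ ⧸ A, ∃ a b c : ℤ,
      q = a • Ideal.Quotient.mk A 1 + b • Ideal.Quotient.mk A (X 0) +
        c • Ideal.Quotient.mk A (X 1) := by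
    intro q
    obtain ⟨f, rfl⟩ := Ideal.Quotient.mk_surjective q
    obtain ⟨a, b, c, h⟩ := exists_reduced_form f
    exact ⟨a, b, c, by rw [hcomb, Ideal.Quotient.eq]; exact hI h⟩
  have ord : ∀ (q : MvPolynomial (Fin 2) ℤ ⧸ A) (n : ℕ), (∀ a : ℤ, a • q = 0 ↔ (n : ℤ) ∣ a) →
      addOrderOf q = n := by
    intro q n h
    refine Nat.dvd_antisymm (addOrderOf_dvd_of_nsmul_eq_zero ?_) ?_
    · have := (h n).2 dvd_rfl
      simpa using this
    · have := (h (addOrderOf q)).1 (by rw [natCast_zsmul]; exact addOrderOf_nsmul_eq_zero q)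
      exact_mod_cast this
  have o1 : ∀ a : ℤ, a • Ideal.Quotient.mk A 1 = 0 ↔ ((9 : ℕ) : ℤ) ∣ a := by
    intro a
    simpa using hzero a 0 0
  have o2 : ∀ a : ℤ, a • Ideal.Quotient.mk A (X 0) = 0 ↔ ((3 : ℕ) : ℤ) ∣ a := by
    intro a
    simpa using hzero 0 a 0
  have o3 : ∀ a : ℤ, a • Ideal.Quotient.mk A (X 1) = 0 ↔ ((3 : ℕ) : ℤ) ∣ a := by
    intro a
    simpa using hzero 0 0 a
  refine ⟨le_antisymm ?_ hI, ?_, ord _ _ o1, ord _ _ o2, ord _ _ o3, hspan⟩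
  · intro f hf
    obtain ⟨a, b, c, h⟩ := exists_reduced_form f
    have h1 : linForm a b c ∈ A := by
      have := A.sub_mem hf (hI h)
      rwa [sub_sub_cancel] at this
    obtain ⟨ha, hb, hc⟩ := (hmem a b c).1 h1
    have := relIdeal.add_mem h (reduced_form_mem_relIdeal ha hb hc)
    rwa [sub_add_cancel] at this
  · let lift (n : ℕ) (q : MvPolynomial (Fin 2) ℤ ⧸ A) (h : (n : ℤ) • q = 0) :
        ZMod n →+ (MvPolynomial (Fin 2) ℤ ⧸ A) :=
      ZMod.lift n ⟨zmultiplesHom _ q, by simpa using h⟩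
    have lift_cast : ∀ n q h (a : ℤ), lift n q h (a : ZMod n) = a • q := by
      intro n q h a
      simp only [lift, ZMod.lift_coe, zmultiplesHom_apply]
    let F : ZMod 9 × ZMod 3 × ZMod 3 →+ (MvPolynomial (Fin 2) ℤ ⧸ A) :=
      (lift 9 _ ((o1 _).2 dvd_rfl)).coprod
        ((lift 3 _ ((o2 _).2 dvd_rfl)).coprod (lift 3 _ ((o3 _).2 dvd_rfl)))
    have hF : ∀ a b c : ℤ, F ((a : ZMod 9), (b : ZMod 3), (c : ZMod 3)) =
        a • Ideal.Quotient.mk A 1 + b • Ideal.Quotient.mk A (X 0) +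
          c • Ideal.Quotient.mk A (X 1) := by
      intro a b c
      simp only [F, AddMonoidHom.coprod_apply, lift_cast, add_assoc]
    refine ⟨(AddEquiv.ofBijective F ⟨?_, ?_⟩).symm⟩
    · rw [injective_iff_map_eq_zero]
      rintro ⟨u, v, w⟩ h
      obtain ⟨a, rfl⟩ := ZMod.intCast_surjective u
      obtain ⟨b, rfl⟩ := ZMod.intCast_surjective v
      obtain ⟨c, rfl⟩ := ZMod.intCast_surjective w
      rw [hF, hzero] at h
      obtain ⟨ha, hb, hc⟩ := h
      rw [(ZMod.intCast_zmod_eq_zero_iff_dvd a 9).2 (by exact_mod_cast ha),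
        (ZMod.intCast_zmod_eq_zero_iff_dvd b 3).2 (by exact_mod_cast hb),
        (ZMod.intCast_zmod_eq_zero_iff_dvd c 3).2 (by exact_mod_cast hc)]
      rfl
    · intro q
      obtain ⟨a, b, c, rfl⟩ := hspan q
      exact ⟨_, hF a b c⟩

/-! ### The relations of the group -/

theorem annihilator_exceptional_H4_groups
    {G : Type*} [Group G] [Finite G]
    (m n e k : ℕ) (x y : G) (α β γ δ ρ : ℤ)
    (hm : 4 ≤ m) (hmn : m < n) (hn2m : n ≤ 2 * m - 3) (he : e = n - m + 2) (he3 : 3 ≤ e)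
    (hk : k ≤ 1) (hkrho : k = 0 ↔ ρ = 0)
    (hα : α = -1 ∨ α = 0 ∨ α = 1) (hβ : β = -1 ∨ β = 0 ∨ β = 1)
    (hγ : γ = -1 ∨ γ = 0 ∨ γ = 1) (hδ : δ = -1 ∨ δ = 0 ∨ δ = 1)
    (hρ : ρ = -1 ∨ ρ = 0 ∨ ρ = 1)
    (hcard : Nat.card G = 3 ^ n)
    (hab : Nat.card (G ⧸ commutator G) = 9)
    (habel : ∀ a ∈ commutator G, ∀ b ∈ commutator G, a * b = b * a)
    (hgen : Subgroup.closure ({x, y} : Set G) = ⊤)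
    (hR1s : ∀ i, 3 ≤ i → sSeq x y i ^ 3 * sSeq x y (i + 1) ^ 3 * sSeq x y (i + 2) = 1)
    (hR1t : ∀ i, 3 ≤ i → tSeq x y i ^ 3 * tSeq x y (i + 1) ^ 3 * tSeq x y (i + 2) = 1)
    (hR2sig : ∀ j, 3 ≤ j → sigSeq x y j ^ 3 * sigSeq x y (j + 1) ^ 3 * sigSeq x y (j + 2) = 1)
    (hR2tau : ∀ j, 3 ≤ j → tauSeq x y j ^ 3 * tauSeq x y (j + 1) ^ 3 * tauSeq x y (j + 2) = 1)
    (hR3s : sSeq x y 2 ^ 3 * sSeq x y 3 ^ 3 * sSeq x y 4 = (tauSeq x y 4)⁻¹)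
    (hR3t : tSeq x y 2 ^ 3 * tSeq x y 3 ^ 3 * tSeq x y 4 = sigSeq x y 4)
    (hR4sig : ∀ j, 3 ≤ j → pcomm (sigSeq x y j) y = 1)
    (hR4tau : ∀ j, 3 ≤ j → pcomm (tauSeq x y j) x = 1)
    (hR5a : ∀ i, 3 ≤ i → i ≤ m - 1 → sigSeq x y i ≠ 1)
    (hR5b : ∀ i, m ≤ i → sigSeq x y i = 1)
    (hR6a : ∀ j, 3 ≤ j → j ≤ e + k → tauSeq x y j ≠ 1)
    (hR6b : ∀ j, e + k + 1 ≤ j → tauSeq x y j = 1)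
    (hR7sig : ∀ i, 5 ≤ i → sigSeq x y i = sSeq x y (i - 2) ^ 3)
    (hR7tau : ∀ i, 5 ≤ i → tauSeq x y i = tSeq x y (i - 2) ^ (-3 : ℤ))
    (hR8s : ∀ j, 5 ≤ j → sSeq x y j = (sigSeq x y j)⁻¹ * (sigSeq x y (j + 1))⁻¹)
    (hR8t : ∀ j, 5 ≤ j → tSeq x y j = tauSeq x y j * tauSeq x y (j + 1))
    (hR9s : pcomm (sSeq x y 3) y = sigSeq x y (m - 1) ^ (-(ρ * δ)))
    (hR9t : pcomm (tSeq x y 3) x = sigSeq x y (m - 1) ^ (-(ρ * δ)))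
    (hR10 : sSeq x y 2 ^ 3 * (sSeq x y 3 * tSeq x y 3) ^ 3 * sSeq x y 4 * tSeq x y 4 =
      sigSeq x y (m - 1) ^ (ρ * β))
    (hR11 : tauSeq x y (e + 1) = sigSeq x y (m - 1) ^ (-ρ))
    (hR12 : sSeq x y 4 * sigSeq x y 4 * sigSeq x y 5 = sigSeq x y (m - 1) ^ (ρ * β))
    (hR13 : sSeq x y 3 * sigSeq x y 3 * sigSeq x y 4 =
      sigSeq x y (m - 2) ^ (ρ * β) * sigSeq x y (m - 1) ^ γ * tauSeq x y e ^ δ)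
    (hR14 : (tSeq x y 3)⁻¹ * tauSeq x y 3 * tauSeq x y 4 =
      sigSeq x y (m - 2) ^ (ρ * δ) * sigSeq x y (m - 1) ^ α * tauSeq x y e ^ β)
    (hm5 : m = 5) (hn6 : n = 6) (hee : e = 3) (hk1 : k = 1)
    (hβ1 : β = 1) (hδ1 : δ = 1) (hρ1 : ρ = 1)
    (Ψ : MvPolynomial (Fin 2) ℤ → G)
    (hΨadd : ∀ f g, Ψ (f + g) = Ψ f * Ψ g)
    (hΨmon : ∀ i j : ℕ, Ψ (X 0 ^ i * X 1 ^ j) = wIter x y i j)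
    (A : Ideal (MvPolynomial (Fin 2) ℤ))
    (hA : ∀ f, f ∈ A ↔ Ψ f = 1)
    :
    A = Ideal.span {X 0 ^ 2, X 1 ^ 2, X 0 * X 1 + 3} ∧
    Nonempty ((MvPolynomial (Fin 2) ℤ ⧸ A) ≃+ (ZMod 9 × ZMod 3 × ZMod 3)) ∧
    addOrderOf (Ideal.Quotient.mk A 1) = 9 ∧
    addOrderOf (Ideal.Quotient.mk A (X 0)) = 3 ∧
    addOrderOf (Ideal.Quotient.mk A (X 1)) = 3 ∧
    (∀ q : MvPolynomial (Fin 2) ℤ ⧸ A, ∃ a b c : ℤ,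
      q = a • Ideal.Quotient.mk A 1 + b • Ideal.Quotient.mk A (X 0) +
        c • Ideal.Quotient.mk A (X 1)) := by
  subst hm5 hn6 hee hk1 hβ1 hδ1 hρ1
  have σ5 : sigSeq x y 5 = 1 := hR5b 5 le_rfl
  have σ6 : sigSeq x y 6 = 1 := hR5b 6 (by norm_num)
  have τ5 : tauSeq x y 5 = 1 := hR6b 5 (by norm_num)
  have τ6 : tauSeq x y 6 = 1 := hR6b 6 (by norm_num)
  have σ4ne : sigSeq x y 4 ≠ 1 := hR5a 4 (by norm_num) (by norm_num)
  have σ4cube : sigSeq x y 4 ^ 3 = 1 := by simpa [σ5, σ6] using hR2sig 4 (by norm_num)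
  have s4 : sSeq x y 4 = 1 := by simpa [σ5] using hR12
  have s3cube : sSeq x y 3 ^ 3 = 1 := by simpa [σ5] using (hR7sig 5 le_rfl).symm
  have t3cube : tSeq x y 3 ^ 3 = 1 := by
    have h := hR7tau 5 le_rfl
    rw [τ5, zpow_neg, eq_comm, inv_eq_one] at h
    exact_mod_cast h
  have τ4 : tauSeq x y 4 = (sigSeq x y 4)⁻¹ := by simpa using hR11
  have scube : pcomm y x ^ 3 = sigSeq x y 4 := by
    rw [s3cube, s4, τ4, inv_inv, mul_one, mul_one] at hR3s
    exact hR3s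
  have t4 : tSeq x y 4 = 1 := by
    rw [t3cube, mul_one, show tSeq x y 2 = pcomm y x from rfl, scube] at hR3t
    exact mul_eq_left.1 hR3t
  have t3x : pcomm (tSeq x y 3) x = (sigSeq x y 4)⁻¹ := by simpa using hR9t
  have order_s : orderOf (pcomm y x) = 9 := by
    have : orderOf (pcomm y x) = 3 ^ (1 + 1) :=
      orderOf_eq_prime_pow (by rw [pow_one, scube]; exact σ4ne)
        (by rw [pow_succ, pow_one, pow_mul, scube, σ4cube])
    simpa using this
  -- The values of `Ψ` on sums make it a homomorphism from the additive group of `ℤ[X,Y]`.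
  let Φ : Multiplicative (MvPolynomial (Fin 2) ℤ) →* G :=
    MonoidHom.mk' (fun f => Ψ f.toAdd) (fun f g => hΨadd _ _)
  have hΨ1 : Ψ 1 = pcomm y x := by simpa [wIter] using hΨmon 0 0
  have hΨint : ∀ a : ℤ, Ψ (a : MvPolynomial (Fin 2) ℤ) = pcomm y x ^ a := by
    intro a
    have h := map_zpow Φ (Multiplicative.ofAdd 1) a
    rw [← ofAdd_zsmul, zsmul_one] at h
    rw [← hΨ1]
    exact h
  refine quotient_structure (Ideal.span_le.2 ?_) ?_
  · rintro f (rfl | rfl | rfl)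
    · have h := hΨmon 2 0
      rw [pow_zero, mul_one] at h
      exact (hA _).2 (h.trans s4)
    · have h := hΨmon 0 2
      rw [pow_zero, one_mul] at h
      exact (hA _).2 (h.trans t4)
    · refine (hA _).2 ?_
      have h := hΨmon 1 1
      rw [pow_one, pow_one] at h
      have h3 := hΨint 3
      rw [Int.cast_ofNat] at h3
      have h3' : pcomm y x ^ (3 : ℤ) = sigSeq x y 4 := by rw [← scube]; exact_mod_cast rfl
      rw [hΨadd, h, h3, h3', show wIter x y 1 1 = pcomm (tSeq x y 3) x from rfl, t3x,
        inv_mul_cancel]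
  · intro a
    rw [hA, hΨint, ← orderOf_dvd_iff_zpow_eq_one, order_s]
    norm_num
end
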